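/- arXiv:2605.26968 — 3 statements merged into one kernel-verified Lean document; each statement's English description precedes it below -/
import Mathlib

section
/- Let u : (0,∞) × 𝕋 → [0,∞) be such that for every t > 0 the function u(t,·) is continuous with ∫_𝕋 u(t,θ) dθ = 1. Assume that max_{θ ∈ 𝕋} u(t,θ) → 1/(2π) as t → ∞, and that there exist K > 0 and a sequence of times t_n → ∞ with ‖u(t_n,·)‖_{C^{1/3}(𝕋)} ≤ K for all n. Then there exists a time t > 0 such that min_{θ ∈ 𝕋} u(t,θ) > 0. -/
/-!
Since `u(tₙ,·)` lies below its maximum `Mₙ → 1/(2π)` and has mean `1/(2π)`, the nonnegative function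
`Mₙ - u(tₙ,·)` has integral tending to `0`; so `u(tₙ,·)` converges to the constant `1/(2π)` in `L¹`,
hence in measure. A uniformly Hölder sequence is equicontinuous: if `u(tₙ,·)` were far from `1/(2π)`
at a point `θ`, it would be far on a neighbourhood of `θ` independent of `n`, whose measure is
positive. So the convergence is pointwise, and by compactness it is uniform.
-/

open MeasureTheory Filter Real

instance : Fact ((0 : ℝ) < 2 * π) := ⟨by positivity⟩

open scoped Topology

theorem equicontinuous_of_dist_le_mul_rpow {ι X E : Type*} [PseudoMetricSpace X]
    [PseudoMetricSpace E] {f : ι → X → E} {C r : ℝ} (hr : 0 < r)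
    (hf : ∀ i x y, dist (f i x) (f i y) ≤ C * dist x y ^ r) : Equicontinuous f := by
  have hmodulus : Tendsto (fun d : ℝ ↦ C * d ^ r) (𝓝 0) (𝓝 0) := by
    simpa [zero_rpow hr.ne'] using
      ((continuousAt_rpow_const 0 r (Or.inr hr.le)).tendsto.const_mul C)
  exact Metric.equicontinuous_of_continuity_modulus _ hmodulus f fun x y i ↦ hf i x y

theorem tendstoUniformly_of_equicontinuous_of_forall_tendsto {ι X E : Type*}
    [TopologicalSpace X] [CompactSpace X] [UniformSpace E] {f : ι → X → E} {g : X → E}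
    {l : Filter ι} (hf : Equicontinuous f) (h : ∀ x, Tendsto (fun i ↦ f i x) l (𝓝 (g x))) :
    TendstoUniformly f g l :=
  UniformFun.tendsto_iff_tendstoUniformly.mp <|
    (hf.tendsto_uniformFun_iff_pi l g).mpr (tendsto_pi_nhds.mpr h)

theorem tendsto_of_tendstoInMeasure_of_equicontinuousAt {ι X E : Type*} [TopologicalSpace X]
    [MeasurableSpace X] {μ : Measure X} [μ.IsOpenPosMeasure] [PseudoMetricSpace E]
    {f : ι → X → E} {g : X → E} {l : Filter ι} {x : X} (hfg : TendstoInMeasure μ f l g)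
    (hf : EquicontinuousAt f x) (hg : ContinuousAt g x) :
    Tendsto (fun i ↦ f i x) l (𝓝 (g x)) := by
  refine Metric.tendsto_nhds.mpr fun ε hε ↦ ?_
  let V := {y | (∀ i, dist (f i x) (f i y) < ε / 3) ∧ dist (g y) (g x) < ε / 3}
  have hV : V ∈ 𝓝 x :=
    (Metric.equicontinuousAt_iff_right.mp hf (ε / 3) (by positivity)).and
      (Metric.tendsto_nhds.mp hg (ε / 3) (by positivity))
  have hsmall : ∀ᶠ i in l, μ {y | ε / 3 ≤ dist (f i y) (g y)} < μ V :=
    (tendstoInMeasure_iff_dist.mp hfg (ε / 3) (by positivity)).eventually_lt_const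
      (Measure.measure_pos_of_mem_nhds μ hV)
  filter_upwards [hsmall] with i hi
  contrapose! hi
  refine measure_mono fun y hy ↦ ?_
  have htriangle := dist_triangle4 (f i x) (f i y) (g y) (g x)
  change ε / 3 ≤ dist (f i y) (g y)
  linarith [hy.1 i, hy.2]

theorem tendsto_integral_abs_sub_of_le {ι α : Type*} [MeasurableSpace α] {μ : Measure α}
    {f g : ι → α → ℝ} {h : α → ℝ} {l : Filter ι} (hf : ∀ i, Integrable (f i) μ)
    (hg : ∀ i, Integrable (g i) μ) (hh : Integrable h μ) (hfg : ∀ i, f i ≤ᵐ[μ] g i)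
    (hf_lim : Tendsto (fun i ↦ ∫ x, f i x ∂μ) l (𝓝 (∫ x, h x ∂μ)))
    (hg_lim : Tendsto (fun i ↦ ∫ x, |g i x - h x| ∂μ) l (𝓝 0)) :
    Tendsto (fun i ↦ ∫ x, |f i x - h x| ∂μ) l (𝓝 0) := by
  have hgh (i : ι) : Integrable (fun x ↦ |g i x - h x|) μ := ((hg i).sub hh).abs
  have hdiff (i : ι) : Integrable (fun x ↦ h x - f i x) μ := hh.sub (hf i)
  -- `|a| = 2 * a⁺ - a` for `a = f i x - h x`, and `a⁺ ≤ |g i x - h x|` because `f i ≤ g i`.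
  have hbound (i : ι) : ∫ x, |f i x - h x| ∂μ ≤
      2 * ∫ x, |g i x - h x| ∂μ + (∫ x, h x ∂μ - ∫ x, f i x ∂μ) := by
    rw [← integral_sub hh (hf i), ← integral_const_mul,
      ← integral_add ((hgh i).const_mul 2) (hdiff i)]
    refine integral_mono_ae ((hf i).sub hh).abs (((hgh i).const_mul 2).add (hdiff i)) ?_
    filter_upwards [hfg i] with x hx
    refine abs_le.mpr ⟨?_, ?_⟩ <;>
      linarith [abs_nonneg (g i x - h x), le_abs_self (g i x - h x)]
  refine squeeze_zero (fun i ↦ integral_nonneg fun x ↦ abs_nonneg _) hbound ?_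
  simpa using (hg_lim.const_mul 2).add (hf_lim.const_sub (∫ x, h x ∂μ))

theorem tendstoInMeasure_of_tendsto_integral_norm_sub {ι α E : Type*} [MeasurableSpace α]
    {μ : Measure α} [NormedAddCommGroup E] {f : ι → α → E} {g : α → E} {l : Filter ι}
    (hf : ∀ i, Integrable (f i) μ) (hg : Integrable g μ)
    (hfg : Tendsto (fun i ↦ ∫ x, ‖f i x - g x‖ ∂μ) l (𝓝 0)) : TendstoInMeasure μ f l g := by
  refine tendstoInMeasure_of_tendsto_eLpNorm one_ne_zero (fun i ↦ (hf i).aestronglyMeasurable)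
    hg.aestronglyMeasurable ?_
  have heLpNorm (i : ι) : eLpNorm (f i - g) 1 μ = ENNReal.ofReal (∫ x, ‖f i x - g x‖ ∂μ) :=
    eLpNorm_one_eq_lintegral_enorm.trans
      (ofReal_integral_norm_eq_lintegral_enorm ((hf i).sub hg)).symm
  simpa only [heLpNorm, ENNReal.ofReal_zero] using ENNReal.tendsto_ofReal hfg

section CompactSpace

variable {X : Type*} [TopologicalSpace X] [CompactSpace X] [MeasurableSpace X]
  [OpensMeasurableSpace X] {μ : Measure X} [IsFiniteMeasure μ]

theorem tendstoInMeasure_const_of_tendsto_iSup_of_tendsto_average {ι : Type*} {f : ι → X → ℝ}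
    {l : Filter ι} {c : ℝ} (hf : ∀ i, Continuous (f i))
    (hsup : Tendsto (fun i ↦ ⨆ x, f i x) l (𝓝 c))
    (havg : Tendsto (fun i ↦ ⨍ x, f i x ∂μ) l (𝓝 c)) : TendstoInMeasure μ f l fun _ ↦ c := by
  have hf_int (i : ι) : Integrable (f i) μ :=
    (hf i).integrable_of_hasCompactSupport (.of_compactSpace _)
  have hle_sup (i : ι) (x : X) : f i x ≤ ⨆ y, f i y :=
    le_ciSup (isCompact_range (hf i)).bddAbove x
  have hintegral : Tendsto (fun i ↦ ∫ x, f i x ∂μ) l (𝓝 (∫ _, c ∂μ)) := by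
    simpa only [measure_smul_average, integral_const] using havg.const_smul (μ.real .univ)
  have hsup_integral : Tendsto (fun i ↦ ∫ _, |(⨆ y, f i y) - c| ∂μ) l (𝓝 0) := by
    simpa using (hsup.sub_const c).abs.const_mul (μ.real .univ)
  exact tendstoInMeasure_of_tendsto_integral_norm_sub hf_int (integrable_const c) <|
    tendsto_integral_abs_sub_of_le hf_int (fun _ ↦ integrable_const _) (integrable_const c)
      (fun i ↦ .of_forall (hle_sup i)) hintegral hsup_integral

variable [μ.IsOpenPosMeasure]

theorem tendstoUniformly_const_of_tendsto_iSup_of_tendsto_average {ι : Type*} {f : ι → X → ℝ}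
    {l : Filter ι} {c : ℝ} (hf : Equicontinuous f)
    (hsup : Tendsto (fun i ↦ ⨆ x, f i x) l (𝓝 c))
    (havg : Tendsto (fun i ↦ ⨍ x, f i x ∂μ) l (𝓝 c)) : TendstoUniformly f (fun _ ↦ c) l :=
  tendstoUniformly_of_equicontinuous_of_forall_tendsto hf fun x ↦
    tendsto_of_tendstoInMeasure_of_equicontinuousAt
      (tendstoInMeasure_const_of_tendsto_iSup_of_tendsto_average hf.continuous hsup havg)
      (hf x) continuousAt_const

theorem exists_time_min_pos_general {u : ℝ → X → ℝ} {c : ℝ} (hc : 0 < c)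
    (hmax : Tendsto (fun t ↦ ⨆ x, u t x) atTop (𝓝 c))
    (havg : Tendsto (fun t ↦ ⨍ x, u t x ∂μ) atTop (𝓝 c))
    {tseq : ℕ → ℝ} (htseq : Tendsto tseq atTop atTop)
    (hequi : Equicontinuous fun n ↦ u (tseq n)) : ∃ t : ℝ, 0 < t ∧ ∀ x, 0 < u t x := by
  have hunif : TendstoUniformly (fun n ↦ u (tseq n)) (fun _ ↦ c) atTop :=
    tendstoUniformly_const_of_tendsto_iSup_of_tendsto_average hequi (hmax.comp htseq)
      (havg.comp htseq)
  obtain ⟨n, hn, hclose⟩ :=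
    ((htseq.eventually_gt_atTop 0).and (Metric.tendstoUniformly_iff.mp hunif c hc)).exists
  refine ⟨tseq n, hn, fun x ↦ ?_⟩
  have hlt : c - u (tseq n) x < c := (le_abs_self _).trans_lt (hclose x)
  linarith

end CompactSpace

/-- Let `u : (0,∞) × 𝕋 → [0,∞)` be such that `u(t,·)` is a continuous probability
density for every `t > 0`. If `max_θ u(t,θ) → 1/(2π)` as `t → ∞` and there are `K > 0`
and times `tₙ → ∞` along which `‖u(tₙ,·)‖_{C^{1/3}(𝕋)} ≤ K`, then there is a time
`t > 0` at which `min_θ u(t,θ) > 0`. Here `𝕋 = ℝ/2πℤ` carries its geodesic distance. -/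
theorem exists_time_min_pos (u : ℝ → AddCircle (2 * π) → ℝ)
    (hnn : ∀ t, 0 < t → ∀ θ, 0 ≤ u t θ)
    (hcont : ∀ t, 0 < t → Continuous (u t))
    (hmass : ∀ t, 0 < t → ∫ θ, u t θ = 1)
    (hmax : Tendsto (fun t => ⨆ θ, u t θ) atTop (nhds (1 / (2 * π))))
    (K : ℝ) (hK : 0 < K) (tseq : ℕ → ℝ) (htseq : Tendsto tseq atTop atTop)
    (hholder : ∀ n, ∀ x y : AddCircle (2 * π),
      |u (tseq n) x - u (tseq n) y| ≤ K * dist x y ^ ((1 : ℝ) / 3)) :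
    ∃ t : ℝ, 0 < t ∧ ∀ θ, 0 < u t θ := by
  have havg : Tendsto (fun t ↦ ⨍ θ, u t θ) atTop (𝓝 (1 / (2 * π))) :=
    tendsto_const_nhds.congr' <| (eventually_gt_atTop 0).mono fun t ht ↦ by
      simp [average_eq, hmass t ht, Measure.real, pi_pos.le]
  exact exists_time_min_pos_general (by positivity) hmax havg htseq
    (equicontinuous_of_dist_le_mul_rpow (by norm_num) hholder)
end

section
/- For every K > 0 there exists δ > 0 with the following property: every continuous function u : 𝕋 → [0,∞) with ∫_𝕋 u(θ) dθ = 1, min_{θ ∈ 𝕋} u(θ) = 0 and ‖u‖_{C^{1/3}(𝕋)} ≤ K satisfies max_{θ ∈ 𝕋} u(θ) ≥ 1/(2π) + δ. -/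
open MeasureTheory Filter Real

/-!
Functions with a common Hölder bound form an equicontinuous family. On a compact space, a member
of such a family that is well below its average at one point stays well below it on a set whose
measure is bounded below uniformly over the family. The mass missing there has to be compensated
elsewhere, so the function exceeds its average somewhere by a uniform amount.
-/

section Average

variable {X : Type*} [MeasurableSpace X] {μ : Measure X} [IsFiniteMeasure μ] {u : X → ℝ} {h : ℝ}

theorem average_add_indicator_const {s : Set X} (hu : Integrable u μ) (hs : NullMeasurableSet s μ) :
    ⨍ x, (u x + s.indicator (fun _ ↦ h) x) ∂μ = ⨍ x, u x ∂μ + h * μ.real s / μ.real Set.univ := by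
  rw [average_eq, average_eq, integral_add hu ((integrable_const h).indicator₀ hs),
    integral_indicator₀ hs, setIntegral_const]
  simp only [smul_eq_mul]
  ring

theorem exists_average_add_measureReal_le (hu : Integrable u μ) (hh : 0 < h)
    (hμ : μ {x | u x ≤ ⨍ y, u y ∂μ - h} ≠ 0) :
    ∃ x, ⨍ y, u y ∂μ + h * μ.real {x | u x ≤ ⨍ y, u y ∂μ - h} / μ.real Set.univ ≤ u x := by
  set m := ⨍ y, u y ∂μ
  set s := {x | u x ≤ m - h}
  have hs : NullMeasurableSet s μ :=
    hu.aestronglyMeasurable.nullMeasurableSet_le aestronglyMeasurable_const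
  have : NeZero μ := ⟨fun hμ₀ ↦ hμ (by simp [hμ₀])⟩
  have gain_pos : 0 < h * μ.real s / μ.real Set.univ :=
    div_pos (mul_pos hh (ENNReal.toReal_pos hμ (measure_ne_top μ s))) measureReal_univ_pos
  -- Apply the first moment method to `u` raised by `h` on `s`: there it is still at most `m`.
  obtain ⟨x, hx⟩ := exists_average_le (NeZero.ne μ)
    (hu.add ((integrable_const h).indicator₀ hs))
  simp only [Pi.add_apply, average_add_indicator_const hu hs] at hx
  have hxs : x ∉ s := fun (hxs : u x ≤ m - h) ↦ by
    rw [Set.indicator_of_mem (show x ∈ s from hxs)] at hx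
    linarith
  exact ⟨x, by simpa only [Set.indicator_of_notMem hxs, add_zero] using hx⟩

end Average

theorem uniformEquicontinuous_of_dist_le_mul_rpow {ι X E : Type*} [PseudoMetricSpace X]
    [PseudoMetricSpace E] {F : ι → X → E} {K α : ℝ} (hα : 0 < α)
    (hF : ∀ i x y, dist (F i x) (F i y) ≤ K * dist x y ^ α) : UniformEquicontinuous F := by
  refine Metric.uniformEquicontinuous_of_continuity_modulus (fun d ↦ K * d ^ α) ?_ F
    fun x y i ↦ hF i x y
  simpa [Real.zero_rpow hα.ne'] using ((Real.continuous_rpow_const hα.le).const_mul K).tendsto 0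

section Compact

variable {ι X : Type*} [TopologicalSpace X] [CompactSpace X] [MeasurableSpace X] (μ : Measure X)
  [μ.IsOpenPosMeasure] [IsFiniteMeasure μ]

theorem exists_pos_le_measureReal_dist_lt {E : Type*} [PseudoMetricSpace E] {F : ι → X → E}
    (hF : Equicontinuous F) {ε : ℝ} (hε : 0 < ε) :
    ∃ c : ℝ, 0 < c ∧ ∀ i x₀, c ≤ μ.real {x | dist (F i x) (F i x₀) < ε} := by
  choose U hU hUF using fun z ↦ Metric.equicontinuousAt_iff_pair.1 (hF z) ε hε
  obtain ⟨t, ht⟩ := CompactSpace.elim_nhds_subcover U hU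
  have inf_pos : 0 < t.inf fun z ↦ μ (U z) :=
    (Finset.lt_inf_iff ENNReal.zero_lt_top).2 fun z _ ↦ Measure.measure_pos_of_mem_nhds μ (hU z)
  obtain ⟨c, hc, hc_inf⟩ := ENNReal.lt_iff_exists_nnreal_btwn.1 inf_pos
  refine ⟨c, by exact_mod_cast hc, fun i x₀ ↦ ?_⟩
  obtain ⟨z, hz, hx₀⟩ : ∃ z ∈ t, x₀ ∈ U z := by
    simpa only [Set.mem_iUnion, exists_prop] using ht.ge (Set.mem_univ x₀)
  have hU_sub : U z ⊆ {x | dist (F i x) (F i x₀) < ε} := fun x hx ↦ hUF z x hx x₀ hx₀ i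
  exact ENNReal.toReal_mono (measure_ne_top μ _)
    (hc_inf.le.trans ((Finset.inf_le hz).trans (measure_mono hU_sub)))

theorem exists_pos_forall_exists_average_add_le [OpensMeasurableSpace X] {F : ι → X → ℝ}
    (hF : Equicontinuous F) {ε : ℝ} (hε : 0 < ε) :
    ∃ δ : ℝ, 0 < δ ∧ ∀ i, (∃ x₀, F i x₀ + ε ≤ ⨍ x, F i x ∂μ) →
      ∃ x, ⨍ x, F i x ∂μ + δ ≤ F i x := by
  rcases isEmpty_or_nonempty X with hX | hX
  · exact ⟨1, one_pos, fun _ ⟨x₀, _⟩ ↦ hX.elim x₀⟩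
  obtain ⟨c, hc, hcF⟩ := exists_pos_le_measureReal_dist_lt μ hF (half_pos hε)
  refine ⟨ε / 2 * c / μ.real Set.univ,
    div_pos (mul_pos (half_pos hε) hc) measureReal_univ_pos, fun i ⟨x₀, hx₀⟩ ↦ ?_⟩
  have near_sub_low : {x | dist (F i x) (F i x₀) < ε / 2} ⊆
      {x | F i x ≤ ⨍ y, F i y ∂μ - ε / 2} := fun x (hx : |F i x - F i x₀| < ε / 2) ↦
    show F i x ≤ _ by linarith [(abs_lt.1 hx).2]
  have low_ge : c ≤ μ.real {x | F i x ≤ ⨍ y, F i y ∂μ - ε / 2} :=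
    (hcF i x₀).trans (measureReal_mono near_sub_low)
  have F_integrable : Integrable (F i) μ :=
    (hF.continuous i).integrable_of_hasCompactSupport (HasCompactSupport.of_compactSpace _)
  obtain ⟨x, hx⟩ := exists_average_add_measureReal_le F_integrable (half_pos hε)
    (ENNReal.toReal_pos_iff.1 (hc.trans_le low_ge)).1.ne'
  exact ⟨x, le_trans (by gcongr) hx⟩

end Compact

theorem max_lower_bound_of_min_zero_general {X : Type*} [PseudoMetricSpace X] [CompactSpace X]
    [MeasurableSpace X] [OpensMeasurableSpace X] (μ : Measure X) [μ.IsOpenPosMeasure]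
    [IsFiniteMeasure μ] (K : ℝ) {α ε : ℝ} (hα : 0 < α) (hε : 0 < ε) :
    ∃ δ : ℝ, 0 < δ ∧ ∀ u : X → ℝ, (∃ x₀, u x₀ + ε ≤ ⨍ x, u x ∂μ) →
      (∀ x y, |u x - u y| ≤ K * dist x y ^ α) → ∃ x, ⨍ y, u y ∂μ + δ ≤ u x := by
  let F : {u : X → ℝ // ∀ x y, |u x - u y| ≤ K * dist x y ^ α} → X → ℝ := Subtype.val
  have hF : Equicontinuous F :=
    (uniformEquicontinuous_of_dist_le_mul_rpow hα Subtype.prop).equicontinuous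
  obtain ⟨δ, hδ, hFδ⟩ := exists_pos_forall_exists_average_add_le μ hF hε
  exact ⟨δ, hδ, fun u hu hH ↦ hFδ ⟨u, hH⟩ hu⟩

theorem average_addCircle_eq {T : ℝ} [hT : Fact (0 < T)] (u : AddCircle T → ℝ) :
    ⨍ x, u x = 1 / T * ∫ x, u x := by
  rw [average_eq, measureReal_def, AddCircle.measure_univ, ENNReal.toReal_ofReal hT.out.le,
    smul_eq_mul, one_div]

/-- For every `K > 0` there is `δ > 0` such that every continuous probability density
`u` on the circle `𝕋 = ℝ/2πℤ` with `min u = 0` and `‖u‖_{C^{1/3}(𝕋)} ≤ K` satisfies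
`max u ≥ 1/(2π) + δ`. Here `𝕋` carries its geodesic distance. -/
theorem max_lower_bound_of_min_zero (K : ℝ) (hK : 0 < K) :
    ∃ δ : ℝ, 0 < δ ∧ ∀ u : AddCircle (2 * π) → ℝ,
      Continuous u → (∀ θ, 0 ≤ u θ) → (∫ θ, u θ = 1) →
      (∃ θ₀, u θ₀ = 0) →
      (∀ x y : AddCircle (2 * π), |u x - u y| ≤ K * dist x y ^ ((1 : ℝ) / 3)) →
      ∃ θ, 1 / (2 * π) + δ ≤ u θ := by
  obtain ⟨δ, hδ, hu⟩ := max_lower_bound_of_min_zero_general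
    (volume : Measure (AddCircle (2 * π))) K (α := 1 / 3) (ε := 1 / (2 * π))
    (by norm_num) (by positivity)
  refine ⟨δ, hδ, fun u _ _ hint ⟨θ₀, hθ₀⟩ hH ↦ ?_⟩
  have havg : ⨍ θ, u θ = 1 / (2 * π) := by rw [average_addCircle_eq, hint, mul_one]
  exact havg ▸ hu u ⟨θ₀, by rw [hθ₀, havg, zero_add]⟩ hH
end

section
/- Let u be a smooth solution of the periodic Dyson equation. Then for every t > 0 one has d/dt ∫_𝕋 u(t,x) log u(t,x) dx + ∫_𝕋 u(t,x) H[∂_x u](t,x) dx = 0. -/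
open MeasureTheory Filter Real intervalIntegral

/-- The periodic Hilbert transform of a (2π-periodic) function `f : ℝ → ℝ`:
`H[f](x) = (1/(2π)) ∫_𝕋 cot((x−y)/2) (f(y) − f(x)) dy`, the circle `𝕋 = ℝ/2πℤ`
being identified with `[0,2π)`. -/
noncomputable def periodicHilbert (f : ℝ → ℝ) (x : ℝ) : ℝ :=
  (1 / (2 * π)) * ∫ y in (0 : ℝ)..(2 * π), Real.cot ((x - y) / 2) * (f y - f x)

/-- A smooth solution of the periodic Dyson equation, described by a `2π`-periodic
(in space) function `u` on `(0,∞) × ℝ`: jointly `C^∞`, strictly positive, of mass one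
on the circle at each positive time, and satisfying `∂ₜ u + ∂ₓ (u H[u]) = 0` on
`(0,∞) × 𝕋`. -/
structure IsPeriodicDysonSolution (u : ℝ → ℝ → ℝ) : Prop where
  periodic : ∀ t x, u t (x + 2 * π) = u t x
  smooth : ContDiffOn ℝ (⊤ : ℕ∞) (fun p : ℝ × ℝ => u p.1 p.2) (Set.Ioi 0 ×ˢ Set.univ)
  pos : ∀ t, 0 < t → ∀ x, 0 < u t x
  mass : ∀ t, 0 < t → ∫ x in (0 : ℝ)..(2 * π), u t x = 1
  pde : ∀ t, 0 < t → ∀ x,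
    deriv (fun s => u s x) t + deriv (fun y => u t y * periodicHilbert (u t) y) x = 0

/-!
On the circle, `H` commutes with `∂ₓ`: after the substitution `z = x - y` the kernel `cot (z / 2)`
no longer depends on `x`, and it is integrable against the differences `f (x - z) - f x`, which
vanish linearly at its singularity `z = 0`. Hence, along the flow,
`d/dt ∫ u log u = ∫ ∂ₜu (log u + 1) = -∫ ∂ₓ(u H[u]) (log u + 1)`, and integration by parts turns
this into `∫ H[u] ∂ₓu = -∫ u ∂ₓH[u] = -∫ u H[∂ₓu]`.
-/

open Set
open scoped Topology Interval NNReal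

section PeriodicFunctions

lemma periodic_deriv {𝕜 F : Type*} [NontriviallyNormedField 𝕜] [NormedAddCommGroup F]
    [NormedSpace 𝕜 F] {f : 𝕜 → F} {c : 𝕜} (hf : Function.Periodic f c) :
    Function.Periodic (deriv f) c := fun x => by
  rw [← deriv_comp_add_const, hf.funext]

lemma exists_lipschitzWith_of_periodic_of_contDiff {F : Type*} [NormedAddCommGroup F]
    [NormedSpace ℝ F] {f : ℝ → F} {c : ℝ} (hf : Function.Periodic f c) (hc : c ≠ 0)
    (hf₁ : ContDiff ℝ 1 f) : ∃ K, LipschitzWith K f := by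
  have hbdd := (periodic_deriv hf).isBounded_of_continuous hc (hf₁.continuous_deriv le_rfl)
  obtain ⟨K, hK⟩ := hbdd.exists_norm_le
  refine ⟨K.toNNReal, lipschitzWith_of_nnnorm_deriv_le (hf₁.differentiable one_ne_zero) fun x => ?_⟩
  exact norm_toNNReal.symm.trans_le (Real.toNNReal_le_toNNReal (hK _ ⟨x, rfl⟩))

end PeriodicFunctions

section PartialFunctions

variable {𝕜 E F : Type*} [NontriviallyNormedField 𝕜] [NormedAddCommGroup E] [NormedSpace 𝕜 E]
  [NormedAddCommGroup F] [NormedSpace 𝕜 F]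

lemma hasDerivAt_comp_prodMk_left {f : 𝕜 × E → F} {p : 𝕜 × E} (hf : DifferentiableAt 𝕜 f p) :
    HasDerivAt (fun s => f (s, p.2)) (fderiv 𝕜 f p (1, 0)) p.1 :=
  hf.hasFDerivAt.comp_hasDerivAt p.1 ((hasDerivAt_id p.1).prodMk (hasDerivAt_const p.1 p.2))

lemma continuousOn_deriv_comp_prodMk_left {f : 𝕜 × E → F} {S : Set (𝕜 × E)} (hS : IsOpen S)
    (hf : ContDiffOn 𝕜 1 f S) :
    ContinuousOn (fun p : 𝕜 × E => deriv (fun s => f (s, p.2)) p.1) S :=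
  ((hf.continuousOn_fderiv_of_isOpen hS le_rfl).clm_apply continuousOn_const).congr fun _ hp =>
    (hasDerivAt_comp_prodMk_left
      ((hf.differentiableOn one_ne_zero).differentiableAt (hS.mem_nhds hp))).deriv

lemma contDiff_comp_prodMk_right {G : Type*} [NormedAddCommGroup G] [NormedSpace 𝕜 G]
    {f : E × F → G} {I : Set E} {t : E} {n : WithTop ℕ∞} (hf : ContDiffOn 𝕜 n f (I ×ˢ univ))
    (ht : t ∈ I) : ContDiff 𝕜 n fun x => f (t, x) :=
  hf.comp_contDiff (contDiff_prodMk_right t) fun x => ⟨ht, mem_univ x⟩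

end PartialFunctions

lemma hasDerivAt_intervalIntegral_of_continuousOn {𝕜 E : Type*} [RCLike 𝕜]
    [NormedAddCommGroup E] [NormedSpace ℝ E] [NormedSpace 𝕜 E] {F F' : 𝕜 → ℝ → E} {I : Set 𝕜}
    {t : 𝕜} {a b : ℝ} (hI : I ∈ 𝓝 t) (hF : ∀ s ∈ I, ContinuousOn (F s) [[a, b]])
    (hF' : ContinuousOn (fun p : 𝕜 × ℝ => F' p.1 p.2) (I ×ˢ [[a, b]]))
    (hderiv : ∀ s ∈ I, ∀ x ∈ [[a, b]], HasDerivAt (fun r => F r x) (F' s x) s) :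
    HasDerivAt (fun s => ∫ x in a..b, F s x) (∫ x in a..b, F' t x) t := by
  obtain ⟨J, hJ, hJI, hJ_compact⟩ := local_compact_nhds hI
  obtain ⟨C, hC⟩ := (hJ_compact.prod isCompact_uIcc).exists_bound_of_continuousOn
    (hF'.mono (prod_mono_left hJI))
  have hF'_slice : ContinuousOn (F' t) [[a, b]] :=
    hF'.comp (Continuous.prodMk_right t).continuousOn fun _ hx => ⟨mem_of_mem_nhds hI, hx⟩
  refine (intervalIntegral.hasDerivAt_integral_of_dominated_loc_of_deriv_le (F := F) (F' := F')
    (bound := fun _ => C) hJ ?_ (hF t (mem_of_mem_nhds hI)).intervalIntegrable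
    hF'_slice.intervalIntegrable.aestronglyMeasurable_restrict_uIoc ?_ intervalIntegrable_const
    ?_).2
  · filter_upwards [hI] with s hs
    exact (hF s hs).intervalIntegrable.aestronglyMeasurable_restrict_uIoc
  · exact .of_forall fun x hx s hs => hC (s, x) ⟨hs, uIoc_subset_uIcc hx⟩
  · exact .of_forall fun x hx s hs => hderiv s (hJI hs) x (uIoc_subset_uIcc hx)

section Entropy

variable {a b : ℝ}

lemma hasDerivAt_integral_mul_log {u u' : ℝ → ℝ → ℝ} {I : Set ℝ} {t : ℝ} (hI : I ∈ 𝓝 t)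
    (hu : ContinuousOn (fun p : ℝ × ℝ => u p.1 p.2) (I ×ˢ [[a, b]]))
    (hu' : ContinuousOn (fun p : ℝ × ℝ => u' p.1 p.2) (I ×ˢ [[a, b]]))
    (hderiv : ∀ s ∈ I, ∀ x ∈ [[a, b]], HasDerivAt (fun r => u r x) (u' s x) s)
    (hne : ∀ s ∈ I, ∀ x ∈ [[a, b]], u s x ≠ 0) :
    HasDerivAt (fun s => ∫ x in a..b, u s x * log (u s x))
      (∫ x in a..b, (log (u t x) + 1) * u' t x) t := by
  refine hasDerivAt_intervalIntegral_of_continuousOn (F := fun s x => u s x * log (u s x))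
    (F' := fun s x => (log (u s x) + 1) * u' s x) hI (fun s hs => ?_) ?_ fun s hs x hx => ?_
  · exact continuous_mul_log.comp_continuousOn <|
      hu.comp (Continuous.prodMk_right s).continuousOn fun _ hx => ⟨hs, hx⟩
  · exact ((hu.log fun p hp => hne p.1 hp.1 p.2 hp.2).add continuousOn_const).mul hu'
  · exact (hasDerivAt_mul_log (hne s hs x hx)).comp s (hderiv s hs x hx)

lemma integral_log_add_one_mul_deriv_mul {v v' h h' : ℝ → ℝ}
    (hv : ∀ x ∈ [[a, b]], HasDerivAt v (v' x) x) (hh : ∀ x ∈ [[a, b]], HasDerivAt h (h' x) x)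
    (hv' : ContinuousOn v' [[a, b]]) (hh' : ContinuousOn h' [[a, b]])
    (hne : ∀ x ∈ [[a, b]], v x ≠ 0) (hv_ends : v b = v a) (hh_ends : h b = h a) :
    ∫ x in a..b, (log (v x) + 1) * (v' x * h x + v x * h' x) = ∫ x in a..b, v x * h' x := by
  have hv_cont : ContinuousOn v [[a, b]] := fun x hx => (hv x hx).continuousAt.continuousWithinAt
  have hh_cont : ContinuousOn h [[a, b]] := fun x hx => (hh x hx).continuousAt.continuousWithinAt
  -- The two integrands differ by the derivative of `v * log v * h`.
  have hprimitive : ∀ x ∈ [[a, b]], HasDerivAt (fun y => v y * log (v y) * h y)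
      ((log (v x) + 1) * (v' x * h x + v x * h' x) - v x * h' x) x := fun x hx => by
    refine (((hasDerivAt_mul_log (hne x hx)).comp x (hv x hx)).mul (hh x hx)).congr_deriv ?_
    simp only [Function.comp_apply]
    ring
  have hlhs : ContinuousOn (fun x => (log (v x) + 1) * (v' x * h x + v x * h' x)) [[a, b]] :=
    ((hv_cont.log hne).add continuousOn_const).mul ((hv'.mul hh_cont).add (hv_cont.mul hh'))
  have hrhs : ContinuousOn (fun x => v x * h' x) [[a, b]] := hv_cont.mul hh'
  rw [← sub_eq_zero, ← integral_sub hlhs.intervalIntegrable hrhs.intervalIntegrable,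
    integral_eq_sub_of_hasDerivAt hprimitive (hlhs.sub hrhs).intervalIntegrable,
    hv_ends, hh_ends, sub_self]

end Entropy

section HilbertTransform

lemma cot_periodic : Function.Periodic Real.cot π := fun x => by
  simp only [Real.cot_eq_cos_div_sin, Real.cos_add_pi, Real.sin_add_pi, neg_div_neg_eq]

lemma measurable_cot : Measurable Real.cot := by
  simp only [funext Real.cot_eq_cos_div_sin]
  fun_prop

lemma abs_cot_half_mul_abs_le {z : ℝ} (hz : |z| ≤ π) : |Real.cot (z / 2)| * |z| ≤ π := by
  rcases eq_or_ne z 0 with rfl | hz₀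
  · simpa using pi_pos.le
  have habs_half : |z / 2| = |z| / 2 := by rw [abs_div, abs_two]
  have hsin : |z| / π ≤ |sin (z / 2)| := calc
    |z| / π = 2 / π * |z / 2| := by rw [habs_half]; ring
    _ ≤ |sin (z / 2)| := mul_abs_le_abs_sin (by rw [habs_half]; gcongr)
  have hsin_pos : 0 < |sin (z / 2)| := lt_of_lt_of_le (by positivity) hsin
  rw [Real.cot_eq_cos_div_sin, abs_div, div_mul_eq_mul_div, div_le_iff₀ hsin_pos]
  calc |cos (z / 2)| * |z| ≤ 1 * |z| := by gcongr; exact abs_cos_le_one _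
    _ = |z| := one_mul _
    _ ≤ π * |sin (z / 2)| := (div_le_iff₀' pi_pos).mp hsin

variable {f : ℝ → ℝ} {K : ℝ≥0}

lemma periodicHilbert_eq_integral_comp_sub (hf : Function.Periodic f (2 * π)) (x : ℝ) :
    periodicHilbert f x =
      (1 / (2 * π)) * ∫ z in (-π)..π, Real.cot (z / 2) * (f (x - z) - f x) := by
  set g : ℝ → ℝ := fun y => Real.cot ((x - y) / 2) * (f y - f x) with hg
  have hg_periodic : Function.Periodic g (2 * π) := fun y => by
    have hshift : (x - (y + 2 * π)) / 2 = (x - y) / 2 - π := by ring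
    simp only [hg, hshift, cot_periodic.sub_eq, hf y]
  have hintegral : ∫ y in (0 : ℝ)..(2 * π), g y = ∫ z in (-π)..π, g (x - z) := calc
    ∫ y in (0 : ℝ)..(2 * π), g y = ∫ y in (x - π)..(x - π + 2 * π), g y := by
      simpa only [zero_add] using hg_periodic.intervalIntegral_add_eq 0 (x - π)
    _ = ∫ y in (x - π)..(x - -π), g y := by congr 1; ring
    _ = ∫ z in (-π)..π, g (x - z) := (integral_comp_sub_left g x).symm
  simpa only [hg, sub_sub_cancel, periodicHilbert] using congrArg (1 / (2 * π) * ·) hintegral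

lemma periodic_periodicHilbert (hf : Function.Periodic f (2 * π)) :
    Function.Periodic (periodicHilbert f) (2 * π) := fun x => by
  simp only [periodicHilbert_eq_integral_comp_sub hf, add_sub_right_comm, hf _]

lemma abs_cot_half_mul_sub_le (hf : LipschitzWith K f) (x : ℝ) {z : ℝ} (hz : z ∈ Ι (-π) π) :
    |Real.cot (z / 2) * (f (x - z) - f x)| ≤ π * K := by
  have hz_abs : |z| ≤ π := by
    rw [uIoc_of_le (neg_le_self pi_pos.le)] at hz
    exact abs_le.mpr ⟨hz.1.le, hz.2⟩
  have hdiff : |f (x - z) - f x| ≤ K * |z| := by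
    simpa [Real.dist_eq] using hf.dist_le_mul (x - z) x
  calc |Real.cot (z / 2) * (f (x - z) - f x)|
      = |Real.cot (z / 2)| * |f (x - z) - f x| := abs_mul _ _
    _ ≤ |Real.cot (z / 2)| * (K * |z|) := by gcongr
    _ = |Real.cot (z / 2)| * |z| * K := by ring
    _ ≤ π * K := by gcongr; exact abs_cot_half_mul_abs_le hz_abs

lemma measurable_cot_half_mul_sub (hf : Measurable f) (x : ℝ) :
    Measurable fun z => Real.cot (z / 2) * (f (x - z) - f x) := by
  have hcot : Measurable fun z : ℝ => Real.cot (z / 2) := measurable_cot.comp (by fun_prop)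
  fun_prop

lemma intervalIntegrable_cot_half_mul_sub (hf : LipschitzWith K f) (x : ℝ) :
    IntervalIntegrable (fun z => Real.cot (z / 2) * (f (x - z) - f x)) volume (-π) π := by
  refine (intervalIntegrable_const (c := π * K)).mono_fun'
    (measurable_cot_half_mul_sub hf.continuous.measurable x).aestronglyMeasurable ?_
  exact (ae_restrict_iff' measurableSet_uIoc).mpr
    (.of_forall fun z hz => abs_cot_half_mul_sub_le hf x hz)

lemma continuous_periodicHilbert (hf : Function.Periodic f (2 * π)) (hK : LipschitzWith K f) :
    Continuous (periodicHilbert f) := by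
  simp only [funext (periodicHilbert_eq_integral_comp_sub hf)]
  refine continuous_const.mul (continuous_of_dominated_interval (bound := fun _ => π * K)
    (fun x => (measurable_cot_half_mul_sub hK.continuous.measurable x).aestronglyMeasurable)
    (fun x => .of_forall fun z hz => abs_cot_half_mul_sub_le hK x hz) intervalIntegrable_const
    (.of_forall fun z _ => ?_))
  have := hK.continuous
  fun_prop

lemma hasDerivAt_periodicHilbert (hf : Function.Periodic f (2 * π)) (hdiff : Differentiable ℝ f)
    (hK : LipschitzWith K (deriv f)) (x : ℝ) :
    HasDerivAt (periodicHilbert f) (periodicHilbert (deriv f) x) x := by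
  obtain ⟨L, hL⟩ := exists_lipschitzWith_of_periodic_of_contDiff hf two_pi_pos.ne'
    (contDiff_one_iff_deriv.mpr ⟨hdiff, hK.continuous⟩)
  have hkernel (y z : ℝ) : HasDerivAt (fun y => Real.cot (z / 2) * (f (y - z) - f y))
      (Real.cot (z / 2) * (deriv f (y - z) - deriv f y)) y :=
    (((hdiff (y - z)).hasDerivAt.comp_sub_const y z).sub (hdiff y).hasDerivAt).const_mul _
  rw [funext (periodicHilbert_eq_integral_comp_sub hf),
    periodicHilbert_eq_integral_comp_sub (periodic_deriv hf)]
  exact (hasDerivAt_integral_of_dominated_loc_of_deriv_le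
    (F' := fun y z => Real.cot (z / 2) * (deriv f (y - z) - deriv f y))
    (bound := fun _ => π * K) univ_mem
    (.of_forall fun y =>
      (measurable_cot_half_mul_sub hdiff.continuous.measurable y).aestronglyMeasurable)
    (intervalIntegrable_cot_half_mul_sub hL x)
    (measurable_cot_half_mul_sub hK.continuous.measurable x).aestronglyMeasurable
    (.of_forall fun z hz y _ => abs_cot_half_mul_sub_le hK y hz) intervalIntegrable_const
    (.of_forall fun z _ y _ => hkernel y z)).2.const_mul _

lemma integral_log_add_one_mul_deriv_mul_periodicHilbert (hf : Function.Periodic f (2 * π))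
    (hdiff : Differentiable ℝ f) (hK : LipschitzWith K (deriv f)) (hne : ∀ x, f x ≠ 0) :
    ∫ x in (0 : ℝ)..(2 * π), (log (f x) + 1) * deriv (fun y => f y * periodicHilbert f y) x =
      ∫ x in (0 : ℝ)..(2 * π), f x * periodicHilbert (deriv f) x := by
  have hflux (x : ℝ) : deriv (fun y => f y * periodicHilbert f y) x =
      deriv f x * periodicHilbert f x + f x * periodicHilbert (deriv f) x :=
    ((hdiff x).hasDerivAt.mul (hasDerivAt_periodicHilbert hf hdiff hK x)).deriv
  simp only [hflux]
  exact integral_log_add_one_mul_deriv_mul (fun x _ => (hdiff x).hasDerivAt)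
    (fun x _ => hasDerivAt_periodicHilbert hf hdiff hK x) hK.continuous.continuousOn
    (continuous_periodicHilbert (periodic_deriv hf) hK).continuousOn (fun x _ => hne x)
    hf.eq (periodic_periodicHilbert hf).eq

end HilbertTransform

lemma IsPeriodicDysonSolution.exists_lipschitzWith_deriv {u : ℝ → ℝ → ℝ}
    (hu : IsPeriodicDysonSolution u) {t : ℝ} (ht : 0 < t) :
    ∃ K, LipschitzWith K (deriv (u t)) :=
  exists_lipschitzWith_of_periodic_of_contDiff (periodic_deriv (hu.periodic t)) two_pi_pos.ne'
    ((contDiff_infty_iff_deriv.mp (contDiff_comp_prodMk_right hu.smooth ht)).2.of_le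
      (mod_cast le_top))

theorem entropy_dissipation_periodic_dyson_general {u : ℝ → ℝ → ℝ} {I : Set ℝ} {t : ℝ} {K : ℝ≥0}
    (hI : IsOpen I) (ht : t ∈ I)
    (hu : ContDiffOn ℝ 1 (fun p : ℝ × ℝ => u p.1 p.2) (I ×ˢ univ))
    (hpos : ∀ s ∈ I, ∀ x, 0 < u s x) (hper : Function.Periodic (u t) (2 * π))
    (hK : LipschitzWith K (deriv (u t)))
    (hpde : ∀ x,
      deriv (fun s => u s x) t + deriv (fun y => u t y * periodicHilbert (u t) y) x = 0) :
    HasDerivAt (fun s => ∫ x in (0 : ℝ)..(2 * π), u s x * log (u s x))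
      (-∫ x in (0 : ℝ)..(2 * π), u t x * periodicHilbert (deriv (u t)) x) t := by
  have hopen : IsOpen (I ×ˢ (univ : Set ℝ)) := hI.prod isOpen_univ
  have hsub : I ×ˢ [[0, 2 * π]] ⊆ I ×ˢ univ := prod_mono_right (subset_univ _)
  have hu_time (s : ℝ) (hs : s ∈ I) (x : ℝ) :
      HasDerivAt (fun r => u r x) (deriv (fun r => u r x) s) s :=
    (hasDerivAt_comp_prodMk_left (p := (s, x)) ((hu.differentiableOn one_ne_zero).differentiableAt
      (hopen.mem_nhds ⟨hs, mem_univ x⟩))).differentiableAt.hasDerivAt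
  have hentropy := hasDerivAt_integral_mul_log (hI.mem_nhds ht) (hu.continuousOn.mono hsub)
    ((continuousOn_deriv_comp_prodMk_left hopen hu).mono hsub)
    (fun s hs x _ => hu_time s hs x) (fun s hs x _ => (hpos s hs x).ne')
  have hu_space : Differentiable ℝ (u t) :=
    (contDiff_comp_prodMk_right hu ht).differentiable one_ne_zero
  refine hentropy.congr_deriv ?_
  simp only [fun x => eq_neg_of_add_eq_zero_left (hpde x), mul_neg, intervalIntegral.integral_neg]
  rw [integral_log_add_one_mul_deriv_mul_periodicHilbert hper hu_space hK
    fun x => (hpos t ht x).ne']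

/-- Entropy dissipation identity for the periodic Dyson equation:
`d/dt ∫_𝕋 u log u dx + ∫_𝕋 u · H[∂ₓu] dx = 0`. -/
theorem entropy_dissipation_periodic_dyson (u : ℝ → ℝ → ℝ)
    (hu : IsPeriodicDysonSolution u) (t : ℝ) (ht : 0 < t) :
    ∃ D : ℝ,
      HasDerivAt (fun s => ∫ x in (0 : ℝ)..(2 * π), u s x * Real.log (u s x)) D t ∧
      D + (∫ x in (0 : ℝ)..(2 * π), u t x * periodicHilbert (deriv (u t)) x) = 0 := by
  obtain ⟨K, hK⟩ := hu.exists_lipschitzWith_deriv ht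
  exact ⟨_, entropy_dissipation_periodic_dyson_general isOpen_Ioi ht
    (hu.smooth.of_le (mod_cast le_top)) hu.pos (hu.periodic t) hK (hu.pde t ht), neg_add_cancel _⟩
end
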